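/- In the online Ramsey game with targets red C₄ and blue P₆, consider the position in which the five edges v₁v₂, v₂v₃, v₃v₄, v₄v₅, v₅v₆ of a path on six distinct vertices have been colored red, red, red, blue, red respectively (case R2). From this position Builder can force a red copy of C₄ or a blue copy of P₆ within at most 6 additional rounds, so within at most 11 rounds in total. -/

import Mathlib

open SimpleGraph

/-- The set `S` of edges of the infinite complete graph on `ℕ` contains a copy of
the graph `G`: there is an injective map of the vertices of `G` into `ℕ` sending
every edge of `G` into `S`. -/
def HasCopy {V : Type*} (G : SimpleGraph V) (S : Set (Sym2 ℕ)) : Prop :=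
  ∃ f : V → ℕ, Function.Injective f ∧ ∀ a b, G.Adj a b → s(f a, f b) ∈ S

/-- `BuilderWinsIn G H R B r` means: in the online Ramsey game with targets a red copy
of `G` and a blue copy of `H`, from the position in which the edges in `R` have been
colored red and the edges in `B` have been colored blue, Builder has a strategy that
guarantees, against every Painter strategy, that within at most `r` further rounds the
colored edges contain a red copy of `G` or a blue copy of `H`.  (In each round Builder
chooses a previously unchosen non-loop edge of the infinite complete graph on `ℕ`, and
Painter immediately colors it red or blue; so Builder wins within `r + 1` rounds iff he
has already won, or he can choose an edge such that whichever color Painter gives it,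
he can win within `r` further rounds.) -/
def BuilderWinsIn {V W : Type*} (G : SimpleGraph V) (H : SimpleGraph W) :
    Set (Sym2 ℕ) → Set (Sym2 ℕ) → ℕ → Prop
  | R, B, 0 => HasCopy G R ∨ HasCopy H B
  | R, B, (r + 1) => HasCopy G R ∨ HasCopy H B ∨
      ∃ e : Sym2 ℕ, ¬ e.IsDiag ∧ e ∉ R ∧ e ∉ B ∧
        BuilderWinsIn G H (insert e R) B r ∧ BuilderWinsIn G H R (insert e B) r

/-- The online size Ramsey number `ř(G, H)`: the least `t` such that, starting from the
empty position, Builder can force a red copy of `G` or a blue copy of `H` within at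
most `t` rounds. -/
noncomputable def onlineRamsey {V W : Type*} (G : SimpleGraph V) (H : SimpleGraph W) : ℕ :=
  sInf {t | BuilderWinsIn G H ∅ ∅ t}

/-!
Label the path `0, 1, …, 5` and let `6` be a fresh vertex. A red path on four vertices *threatens*
the edge joining its ends: Painter has to color it blue, so such a move costs Builder one round and
adds a blue edge. After the threat `03` the blue edges are `03` and `34`, and Builder plays `14`.

* If `14` is red, then `05` and `25` are threats and `26` finishes, by `4, 3, 0, 5, 2, 6` if it is
  blue and by the further threat `46` if it is red.
* If `14` is blue, Builder plays `25`. If `25` is red, then `05` is a threat and `16` finishes.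
  If `25` is blue, then `15` finishes.
-/

theorem getElem_mem_of_pathGraph_adj {α : Type*} {l : List α} {S : Set (Sym2 α)}
    (hS : l.IsChain fun a b => s(a, b) ∈ S) {i j : Fin l.length}
    (hij : (pathGraph l.length).Adj i j) : s(l[i], l[j]) ∈ S := by
  rw [List.isChain_iff_getElem] at hS
  rcases pathGraph_adj.1 hij with h | h
  · simpa [h] using hS i (by omega)
  · rw [Sym2.eq_swap]
    simpa [h] using hS j (by omega)

theorem hasCopy_pathGraph {n : ℕ} {l : List ℕ} {S : Set (Sym2 ℕ)} (hn : l.length = n)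
    (hl : l.Nodup) (hS : l.IsChain fun a b => s(a, b) ∈ S) : HasCopy (pathGraph n) S := by
  subst hn
  exact ⟨l.get, List.nodup_iff_injective_get.1 hl, fun _ _ => getElem_mem_of_pathGraph_adj hS⟩

theorem pathGraph_adj_or_eq_ends_of_cycleGraph_adj {n : ℕ} {i j : Fin (n + 1)}
    (hij : (cycleGraph (n + 1)).Adj i j) :
    (pathGraph (n + 1)).Adj i j ∨ s(i, j) = s(0, Fin.last n) := by
  wlog h : i ≤ j generalizing i j
  · rw [SimpleGraph.adj_comm, Sym2.eq_swap]
    exact this hij.symm (le_of_not_ge h)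
  rw [pathGraph_adj, Sym2.eq_iff]
  rw [cycleGraph_adj', Fin.sub_val_of_le h] at hij
  rcases h.eq_or_lt with rfl | hlt
  · simp at hij
  · rw [Fin.coe_sub_iff_lt.2 hlt] at hij
    simp only [Fin.ext_iff, Fin.val_zero, Fin.val_last]
    omega

theorem hasCopy_cycleGraph {n a b : ℕ} {l : List ℕ} {S : Set (Sym2 ℕ)}
    (hn : (a :: (l ++ [b])).length = n) (hl : (a :: (l ++ [b])).Nodup)
    (hS : (a :: (l ++ [b])).IsChain fun x y => s(x, y) ∈ S) (hab : s(a, b) ∈ S) :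
    HasCopy (cycleGraph n) S := by
  subst hn
  refine ⟨(a :: (l ++ [b])).get, List.nodup_iff_injective_get.1 hl, fun i j hij => ?_⟩
  rcases pathGraph_adj_or_eq_ends_of_cycleGraph_adj hij with hpath | hends
  · exact getElem_mem_of_pathGraph_adj hS hpath
  · have hmap := congrArg (Sym2.map (a :: (l ++ [b])).get) hends
    simp only [Sym2.map_mk] at hmap
    rw [hmap]
    simpa using hab

section Game

variable {V W : Type*} {G : SimpleGraph V} {H : SimpleGraph W} {R B : Set (Sym2 ℕ)} {r : ℕ}

theorem BuilderWinsIn.of_hasCopy (h : HasCopy G R ∨ HasCopy H B) : BuilderWinsIn G H R B r := by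
  cases r with
  | zero => exact h
  | succ r => exact or_assoc.1 (.inl h)

theorem BuilderWinsIn.succ (h : BuilderWinsIn G H R B r) : BuilderWinsIn G H R B (r + 1) := by
  induction r generalizing R B with
  | zero => exact .of_hasCopy h
  | succ r ih =>
    rcases h with h | h | ⟨e, he, heR, heB, hred, hblue⟩
    · exact .inl h
    · exact .inr (.inl h)
    · exact .inr (.inr ⟨e, he, heR, heB, ih hred, ih hblue⟩)

/-- If `e` is already colored, Builder passes: one of the two continuations then starts from the
current position. -/
theorem BuilderWinsIn.of_move {e : Sym2 ℕ} (he : ¬ e.IsDiag)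
    (hred : BuilderWinsIn G H (insert e R) B r) (hblue : BuilderWinsIn G H R (insert e B) r) :
    BuilderWinsIn G H R B (r + 1) := by
  by_cases heR : e ∈ R
  · exact (Set.insert_eq_of_mem heR ▸ hred).succ
  by_cases heB : e ∈ B
  · exact (Set.insert_eq_of_mem heB ▸ hblue).succ
  exact .inr (.inr ⟨e, he, heR, heB, hred, hblue⟩)

end Game

theorem isChain_map_mem_image {α : Type*} {w : α → ℕ} {S : Set (Sym2 α)} {l : List α}
    (h : l.IsChain fun x y => s(x, y) ∈ S) :
    (l.map w).IsChain fun x y => s(x, y) ∈ Sym2.map w '' S :=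
  List.isChain_map_of_isChain w (fun _ _ hxy => ⟨_, hxy, rfl⟩) h

/-- Builder wins within `r` rounds from the position whose red and blue edges are the images of
`R` and `B` under a labeling `w` of vertices by elements of `α`. Describing positions by finite
sets of label pairs makes the existence of concrete paths in them decidable. -/
def BuilderWinsLabeled {V W α : Type*} (G : SimpleGraph V) (H : SimpleGraph W) (w : α → ℕ)
    (R B : Finset (Sym2 α)) (r : ℕ) : Prop :=
  BuilderWinsIn G H (Sym2.map w '' R) (Sym2.map w '' B) r

namespace BuilderWinsLabeled

variable {V W α : Type*} {G : SimpleGraph V} {H : SimpleGraph W} {w : α → ℕ}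
  {R B : Finset (Sym2 α)} {r : ℕ}

theorem of_blue_path (hw : w.Injective) (l : List α) (hl : l.Nodup)
    (hB : l.IsChain fun x y => s(x, y) ∈ B) :
    BuilderWinsLabeled G (pathGraph l.length) w R B r :=
  .of_hasCopy (.inr (hasCopy_pathGraph (l.length_map w) (hl.map hw) (isChain_map_mem_image hB)))

variable [DecidableEq α]

theorem of_move (hw : w.Injective) (a b : α) (hab : a ≠ b)
    (hred : BuilderWinsLabeled G H w (insert s(a, b) R) B r)
    (hblue : BuilderWinsLabeled G H w R (insert s(a, b) B) r) :
    BuilderWinsLabeled G H w R B (r + 1) := by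
  simp only [BuilderWinsLabeled, Finset.coe_insert, Set.image_insert_eq] at hred hblue
  exact BuilderWinsIn.of_move (e := s(w a, w b)) (by simpa using hw.ne hab) hred hblue

theorem of_threat (hw : w.Injective) (a : α) (l : List α) (b : α) (hl : (a :: (l ++ [b])).Nodup)
    (hR : (a :: (l ++ [b])).IsChain fun x y => s(x, y) ∈ R)
    (hblue : BuilderWinsLabeled (cycleGraph (l.length + 2)) H w R (insert s(a, b) B) r) :
    BuilderWinsLabeled (cycleGraph (l.length + 2)) H w R B (r + 1) := by
  have hab : a ≠ b := by rintro rfl; simp at hl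
  refine of_move hw a b hab (.of_hasCopy (.inl ?_)) hblue
  have hR' : (a :: (l ++ [b])).IsChain fun x y => s(x, y) ∈ insert s(a, b) R :=
    hR.imp fun _ _ => Finset.mem_insert_of_mem
  have hcycle : s(w a, w b) ∈ Sym2.map w '' ↑(insert s(a, b) R) := ⟨s(a, b), by simp, rfl⟩
  exact hasCopy_cycleGraph (l := l.map w) (by simp) (by simpa using hl.map hw)
    (by simpa using isChain_map_mem_image (w := w) hR') hcycle

end BuilderWinsLabeled

section CaseR2

variable {w : Fin 7 → ℕ}

theorem builderWinsLabeled_of_red_14 (hw : w.Injective) :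
    BuilderWinsLabeled (cycleGraph 4) (pathGraph 6) w
      {s(1, 4), s(0, 1), s(1, 2), s(2, 3), s(4, 5)} {s(0, 3), s(3, 4)} 4 := by
  refine .of_threat hw 0 [1, 4] 5 (by decide) (by decide) ?_
  refine .of_threat hw 2 [1, 4] 5 (by decide) (by decide) ?_
  refine .of_move hw 2 6 (by decide) ?red ?blue
  case red =>
    refine .of_threat hw 4 [1, 2] 6 (by decide) (by decide) ?_
    exact .of_blue_path hw [2, 5, 0, 3, 4, 6] (by decide) (by decide)
  case blue => exact .of_blue_path hw [4, 3, 0, 5, 2, 6] (by decide) (by decide)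

theorem builderWinsLabeled_of_blue_14_red_25 (hw : w.Injective) :
    BuilderWinsLabeled (cycleGraph 4) (pathGraph 6) w
      {s(2, 5), s(0, 1), s(1, 2), s(2, 3), s(4, 5)} {s(1, 4), s(0, 3), s(3, 4)} 3 := by
  refine .of_threat hw 0 [1, 2] 5 (by decide) (by decide) ?_
  refine .of_move hw 1 6 (by decide) ?red ?blue
  case red =>
    refine .of_threat hw 5 [2, 1] 6 (by decide) (by decide) ?_
    exact .of_blue_path hw [1, 4, 3, 0, 5, 6] (by decide) (by decide)
  case blue => exact .of_blue_path hw [5, 0, 3, 4, 1, 6] (by decide) (by decide)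

theorem builderWinsLabeled_of_blue_14_blue_25 (hw : w.Injective) :
    BuilderWinsLabeled (cycleGraph 4) (pathGraph 6) w
      {s(0, 1), s(1, 2), s(2, 3), s(4, 5)} {s(2, 5), s(1, 4), s(0, 3), s(3, 4)} 3 := by
  refine .of_move hw 1 5 (by decide) ?red ?blue
  case red =>
    refine .of_threat hw 2 [1, 5] 4 (by decide) (by decide) ?_
    refine .of_threat hw 3 [2, 1] 5 (by decide) (by decide) ?_
    exact .of_blue_path hw [0, 3, 5, 2, 4, 1] (by decide) (by decide)
  case blue => exact .of_blue_path hw [0, 3, 4, 1, 5, 2] (by decide) (by decide)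

theorem builderWinsLabeled_R2 (hw : w.Injective) :
    BuilderWinsLabeled (cycleGraph 4) (pathGraph 6) w
      {s(0, 1), s(1, 2), s(2, 3), s(4, 5)} {s(3, 4)} 6 := by
  refine .of_threat hw 0 [1, 2] 3 (by decide) (by decide) ?_
  refine .of_move hw 1 4 (by decide) (builderWinsLabeled_of_red_14 hw) ?_
  exact .of_move hw 2 5 (by decide) (builderWinsLabeled_of_blue_14_red_25 hw)
    (builderWinsLabeled_of_blue_14_blue_25 hw)

end CaseR2

theorem exists_injective_snoc {α : Type*} [Infinite α] {n : ℕ} {v : Fin n → α}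
    (hv : v.Injective) :
    ∃ x, Function.Injective (Fin.snoc v x : Fin (n + 1) → α) := by
  obtain ⟨x, hx⟩ := (Set.finite_range v).exists_notMem
  exact ⟨x, Fin.snoc_injective_iff.2 ⟨hv, hx⟩⟩

/-- Case `R2`: in the online Ramsey game with targets red `C₄` and blue `P₆`,
from the position in which the five edges `v₁v₂, v₂v₃, v₃v₄, v₄v₅, v₅v₆` of a path on
six distinct vertices have been colored red, red, red, blue, red respectively,
Builder can force a red copy of `C₄` or a blue copy of `P₆` within at most 6 additional
rounds (so within at most 11 rounds in total). -/
theorem builder_wins_case_R2 (v : Fin 6 → ℕ) (hv : Function.Injective v) :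
    BuilderWinsIn (cycleGraph 4) (pathGraph 6)
      {s(v 0, v 1), s(v 1, v 2), s(v 2, v 3), s(v 4, v 5)}
      {s(v 3, v 4)} 6 := by
  obtain ⟨x, hw⟩ := exists_injective_snoc hv
  have hwv (i : Fin 6) : v i = (Fin.snoc v x : Fin 7 → ℕ) i.castSucc := by simp
  have hwin := builderWinsLabeled_R2 hw
  simp only [hwv]
  simpa [BuilderWinsLabeled, Set.image_insert_eq] using hwin
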